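/- If C is a permutation class containing only finitely many simple permutations, then the generating function of C is algebraic over ℚ[x]. -/

import Mathlib

/-- A permutation of length `n`. -/
abbrev Perm (n : ℕ) := Equiv.Perm (Fin n)

/-- `σ` is contained in `π`: there is a strictly increasing sequence of indices of `π`
on which `π` is order isomorphic to `σ`. -/
def Contains {m n : ℕ} (σ : Perm m) (π : Perm n) : Prop :=
  ∃ f : Fin m → Fin n, StrictMono f ∧ ∀ s t : Fin m, π (f s) < π (f t) ↔ σ s < σ t

/-- A permutation class: a downset in the containment order. -/
def IsPermClass (C : ∀ n, Set (Perm n)) : Prop :=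
  ∀ ⦃m n : ℕ⦄ (σ : Perm m) (π : Perm n), π ∈ C n → Contains σ π → σ ∈ C m

/-- A set of contiguous values. -/
def IsRange {n : ℕ} (I : Finset (Fin n)) : Prop :=
  ∀ ⦃i j l : Fin n⦄, i ∈ I → l ∈ I → i ≤ j → j ≤ l → j ∈ I

/-- An interval of `π`: a set of contiguous indices mapped to a set of contiguous values. -/
def IsPermInterval {n : ℕ} (π : Perm n) (I : Finset (Fin n)) : Prop :=
  IsRange I ∧ IsRange (I.image π)

/-- A permutation is simple if its only intervals have size `0`, `1`, or `n`. -/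
def IsSimple {n : ℕ} (π : Perm n) : Prop :=
  ∀ I : Finset (Fin n), IsPermInterval π I → I.card ≤ 1 ∨ I.card = n

/-- The set of simple permutations belonging to the class `C` is finite. -/
def FinitelyManySimples (C : ∀ n, Set (Perm n)) : Prop :=
  {p : Σ n : ℕ, Perm n | p.2 ∈ C p.1 ∧ IsSimple p.2}.Finite

/-- The generating function `∑_{n ≥ 1} |S_n| xⁿ` of a set of permutations. -/
noncomputable def genFun (S : ∀ n, Set (Perm n)) : PowerSeries ℚ :=
  PowerSeries.mk fun n => if n = 0 then 0 else (Nat.card (S n) : ℚ)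

/-- A power series `f` is algebraic over `ℚ[x]` if there is a nonzero polynomial
`P(x,y) ∈ ℚ[x][y]` with `P(x,f) = 0`. -/
def IsAlgebraicOverQx (f : PowerSeries ℚ) : Prop :=
  ∃ P : Polynomial (Polynomial ℚ), P ≠ 0 ∧
    Polynomial.eval₂ Polynomial.coeToPowerSeries.ringHom f P = 0

/-!
Every permutation of length at least two is the inflation of a unique simple permutation `s`. The
blocks are unique as well, unless `s` has length two; in that case they become unique by requiring
the first block to be as small as possible. So each permutation in the class is a point, or arises
in exactly one way from one of finitely many simple permutations and a tuple of smaller members.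

The class is well-quasi-ordered by containment, by the minimal bad sequence argument. Hence whether
an inflation of `s` by members of the class is again a member depends only on the patterns of length
at most `M` in the components, for some `M`. Sorting the members by these patterns and by their
simple quotient gives finitely many types, and the generating function of each type is a sum of
monomials in `x` and in the generating functions of all types, where a monomial is a power of `x` or
has total degree at least two.

Let `A` be the algebra over `ℚ[x]` generated by these series, and let `m` be the ideal of those
without constant term. The generators belong to `ℚ[x] + m ^ 2`, so the module `Ω` of differentials
satisfies `Ω = m Ω`. By Nakayama, a nonzero element of `A` kills `Ω`, so the fraction field of `A`
is unramified, hence algebraic, over `ℚ(x)`.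
-/

theorem pow_mul_prod_mem_pow {A κ : Type*} [CommSemiring A] [Fintype κ] {m : Ideal A} {a : A}
    (ha : a ∈ m) (w : ℕ) {x : κ → A} (hx : ∀ i, x i ∈ m) :
    a ^ w * ∏ i, x i ∈ m ^ (w + Fintype.card κ) := by
  rw [pow_add]
  refine Ideal.mul_mem_mul (Ideal.pow_mem_pow ha w) ?_
  simpa using Ideal.prod_mem_prod (I := fun _ : κ => m) fun i (_ : i ∈ Finset.univ) => hx i

section Unramified

open KaehlerDifferential

variable {R A : Type*} [CommRing R] [CommRing A] [Algebra R A]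

theorem kaehlerDifferential_eq_smul_top_of_surjective {m : Ideal A}
    (h : Function.Surjective (algebraMap R (A ⧸ m ^ 2))) :
    (⊤ : Submodule A (Ω[A⁄R])) = m • ⊤ := by
  have D_mem_of_mem_sq : ∀ a ∈ m * m, D R A a ∈ m • (⊤ : Submodule A (Ω[A⁄R])) := fun a ha => by
    induction ha using Submodule.mul_induction_on' with
    | mem_mul_mem x hx y hy =>
      rw [Derivation.leibniz]
      exact add_mem (Submodule.smul_mem_smul hx trivial) (Submodule.smul_mem_smul hy trivial)
    | add x _ y _ hx hy =>
      rw [map_add]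
      exact add_mem hx hy
  refine le_antisymm ?_ le_top
  rw [← span_range_derivation, Submodule.span_le]
  rintro _ ⟨a, rfl⟩
  obtain ⟨r, hr⟩ := h (Ideal.Quotient.mk (m ^ 2) a)
  have hD : D R A a = D R A (a - algebraMap R A r) := by
    rw [map_sub, Derivation.map_algebraMap, sub_zero]
  rw [SetLike.mem_coe, span_range_derivation, hD]
  exact D_mem_of_mem_sq _ (by rw [← pow_two, ← Ideal.Quotient.mk_eq_mk_iff_sub_mem, ← hr]; rfl)

variable [IsDomain A] [FaithfulSMul R A]

theorem isAlgebraic_of_forall_smul_D_eq_zero [Algebra.FiniteType R A] {r : A} (hr : r ≠ 0)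
    (h : ∀ a, r • D R A a = 0) : Algebra.IsAlgebraic R A := by
  have : IsDomain R := (FaithfulSMul.algebraMap_injective R A).isDomain (algebraMap R A)
  let K := FractionRing R
  let L := FractionRing A
  let : Algebra K L := FractionRing.liftAlgebra R L
  have : IsScalarTower R K L := FractionRing.isScalarTower_liftAlgebra R L
  have D_algebraMap (a : A) : D K L (algebraMap A L a) = 0 := by
    have := congrArg (map R K A L) (h a)
    rw [map_smul, map_D, map_zero, ← algebraMap_smul L] at this
    exact (smul_eq_zero_iff_right ((FaithfulSMul.algebraMap_eq_zero_iff A L).not.2 hr)).1 this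
  have D_eq_zero (x : L) : D K L x = 0 := by
    obtain ⟨a, b, -, rfl⟩ := IsFractionRing.div_surjective A x
    simp only [Derivation.leibniz_div, D_algebraMap, smul_zero, sub_zero]
  have : Algebra.FormallyUnramified K L := by
    refine (Algebra.formallyUnramified_iff K L).2 ((Submodule.subsingleton_iff L).1
      (subsingleton_of_bot_eq_top ?_))
    rw [← span_range_derivation, eq_comm, Submodule.span_eq_bot]
    exact Set.forall_mem_range.2 D_eq_zero
  have : Algebra.EssFiniteType A L := .of_isLocalization L (nonZeroDivisors A)
  have : Algebra.EssFiniteType R L := .comp R A L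
  have : Algebra.EssFiniteType K L := .of_comp R K L
  have : Algebra.IsSeparable K L := (Algebra.FormallyUnramified.iff_isSeparable K L).1 ‹_›
  have : Algebra.IsAlgebraic R L :=
    (IsFractionRing.comap_isAlgebraic_iff (K := K)).2 inferInstance
  exact ⟨fun a => (isAlgebraic_algebraMap_iff (IsFractionRing.injective A L)).1
    (Algebra.IsAlgebraic.isAlgebraic _)⟩

/-- By Nakayama, an element of `1 + m` kills all differentials of `A` over `R`. -/
theorem isAlgebraic_of_surjective_quotient_sq [Algebra.FiniteType R A] {m : Ideal A} (hm : m ≠ ⊤)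
    (h : Function.Surjective (algebraMap R (A ⧸ m ^ 2))) : Algebra.IsAlgebraic R A := by
  obtain ⟨r, hr, hrΩ⟩ := Submodule.exists_sub_one_mem_and_smul_eq_zero_of_fg_of_le_smul m
    (⊤ : Submodule A (Ω[A⁄R])) Module.Finite.fg_top
    (kaehlerDifferential_eq_smul_top_of_surjective h).le
  refine isAlgebraic_of_forall_smul_D_eq_zero (r := r) ?_ fun a => hrΩ _ trivial
  rintro rfl
  exact hm ((Ideal.eq_top_iff_one m).2 (by simpa using hr))

theorem isAlgebraic_of_mem_one_sup_sq {ι : Type*} [Finite ι] {f : ι → A}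
    (hf : Algebra.adjoin R (Set.range f) = ⊤) {m : Ideal A} (hm : m ≠ ⊤)
    (h : ∀ i, f i ∈ (1 : Submodule R A) ⊔ (m ^ 2).restrictScalars R) :
    Algebra.IsAlgebraic R A := by
  have : Algebra.FiniteType R A := ⟨hf ▸ Subalgebra.fg_def.2 ⟨_, Set.finite_range f, rfl⟩⟩
  have mk_mem_bot (i : ι) : Ideal.Quotient.mkₐ R (m ^ 2) (f i) ∈ (⊥ : Subalgebra R _) := by
    obtain ⟨_, ha, b, hb, hfi⟩ := Submodule.mem_sup.1 (h i)
    obtain ⟨r, rfl⟩ := Submodule.mem_one.1 ha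
    rw [← hfi, map_add, AlgHom.commutes, Ideal.Quotient.mkₐ_eq_mk,
      Ideal.Quotient.eq_zero_iff_mem.2 hb, add_zero]
    exact Subalgebra.algebraMap_mem _ r
  refine isAlgebraic_of_surjective_quotient_sq hm fun x => ?_
  obtain ⟨a, rfl⟩ := Ideal.Quotient.mk_surjective x
  have adjoin_le : Algebra.adjoin R (Set.range f) ≤
      (⊥ : Subalgebra R (A ⧸ m ^ 2)).comap (Ideal.Quotient.mkₐ R (m ^ 2)) :=
    Algebra.adjoin_le (Set.range_subset_iff.2 mk_mem_bot)
  exact Algebra.mem_bot.1 (adjoin_le (hf ▸ Algebra.mem_top : a ∈ _))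

end Unramified

section SizeGF

open PowerSeries

/-- The generating function `∑ |{y | size y = n}| xⁿ` of a type whose elements carry a size. A
size attained infinitely often contributes `0`. -/
noncomputable def sizeGF (R : Type*) [Semiring R] {Y : Type*} (size : Y → ℕ) : R⟦X⟧ :=
  .mk fun n => (Nat.card {y // size y = n} : R)

variable {R : Type*}

theorem sizeGF_congr [Semiring R] {Y Z : Type*} {sizeY : Y → ℕ} {sizeZ : Z → ℕ} (e : Y ≃ Z)
    (h : ∀ y, sizeZ (e y) = sizeY y) : sizeGF R sizeY = sizeGF R sizeZ := by
  ext n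
  simp only [sizeGF, coeff_mk]
  exact congrArg _ (Nat.card_congr (e.subtypeEquiv fun y => by rw [h]))

theorem sizeGF_of_isEmpty [Semiring R] {Y : Type*} [IsEmpty Y] (size : Y → ℕ) :
    sizeGF R size = 0 := by
  ext n
  simp [sizeGF]

theorem constantCoeff_sizeGF [Semiring R] {Y : Type*} {size : Y → ℕ} (h : ∀ y, 0 < size y) :
    constantCoeff (sizeGF R size) = 0 := by
  have : IsEmpty {y // size y = 0} := ⟨fun y => (h y).ne' y.2⟩
  simp [← coeff_zero_eq_constantCoeff_apply, sizeGF]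

theorem finite_size_restrict {Y : Type*} {size : Y → ℕ} (hfin : ∀ n, Finite {y // size y = n})
    (p : Y → Prop) (n : ℕ) : Finite {y : {y // p y} // size y = n} :=
  have := hfin n
  Finite.of_injective (Subtype.map Subtype.val fun _ => id : _ → {y // size y = n})
    (Subtype.map_injective _ Subtype.val_injective)

/-- The generating function of the elements of type `t`. -/
noncomputable def fiberGF (R : Type*) [Semiring R] {Y T : Type*} (size : Y → ℕ) (ty : Y → T)
    (t : T) : R⟦X⟧ :=
  sizeGF R fun y : {y // ty y = t} => size y

theorem sizeGF_eq_sum_fiber [Semiring R] {Y T : Type*} [Fintype T] {size : Y → ℕ}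
    (hfin : ∀ n, Finite {y // size y = n}) (ty : Y → T) :
    sizeGF R size = ∑ t, fiberGF R size ty t := by
  ext n
  have := fun t => finite_size_restrict hfin (fun y => ty y = t) n
  simp only [fiberGF, sizeGF, coeff_mk, map_sum]
  rw [← Nat.cast_sum, ← Nat.card_sigma]
  exact congrArg _ (Nat.card_congr
    ((Equiv.sigmaFiberEquiv fun y : {y // size y = n} => ty y).symm.trans
      (Equiv.sigmaCongrRight fun t =>
        ⟨fun y => ⟨⟨y, y.2⟩, y.1.2⟩, fun y => ⟨⟨y, y.2⟩, y.1.2⟩, fun _ => rfl, fun _ => rfl⟩)))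

theorem sizeGF_const_add [Semiring R] {Y : Type*} (size : Y → ℕ) (w : ℕ) :
    sizeGF R (fun y => w + size y) = X ^ w * sizeGF R size := by
  ext n
  simp only [sizeGF, coeff_mk, coeff_X_pow_mul']
  split_ifs with hw
  · exact congrArg _ (Nat.card_congr (Equiv.subtypeEquivRight fun y => by omega))
  · have : IsEmpty {y // w + size y = n} := ⟨fun y => by omega⟩
    simp

open Classical in
/-- The tuples of total size `n`, sorted by the sizes of their components. -/
noncomputable def piSizeEquiv {ι : Type*} [Fintype ι] {Y : ι → Type*} (size : ∀ i, Y i → ℕ)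
    (n : ℕ) : {p : ∀ i, Y i // ∑ i, size i (p i) = n} ≃
      Σ l : (Finset.univ : Finset ι).finsuppAntidiag n, ∀ i, {y // size i y = l.1 i} where
  toFun p := ⟨⟨Finsupp.equivFunOnFinite.symm fun i => size i (p.1 i), by
    simp [Finset.mem_finsuppAntidiag, p.2]⟩, fun i => ⟨p.1 i, rfl⟩⟩
  invFun q := ⟨fun i => (q.2 i).1, (Finset.sum_congr rfl fun i _ => (q.2 i).2).trans
    (Finset.mem_finsuppAntidiag.1 q.1.2).1⟩
  left_inv _ := rfl
  right_inv := by
    rintro ⟨⟨l, hl⟩, q⟩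
    have size_eq : ∀ i, size i (q i).1 = l i := fun i => (q i).2
    refine Sigma.ext (Subtype.ext (Finsupp.ext size_eq)) ?_
    refine Function.hfunext rfl fun i j hij => ?_
    cases hij
    refine (Subtype.heq_iff_coe_eq fun y => ?_).2 rfl
    rw [← size_eq i]
    rfl

theorem sizeGF_pi [CommSemiring R] {ι : Type*} [Fintype ι] {Y : ι → Type*}
    (size : ∀ i, Y i → ℕ) (hfin : ∀ i n, Finite {y // size i y = n}) :
    sizeGF R (fun p : ∀ i, Y i => ∑ i, size i (p i)) = ∏ i, sizeGF R (size i) := by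
  classical
  ext n
  simp only [sizeGF, coeff_mk, coeff_prod]
  rw [Nat.card_congr (piSizeEquiv size n), Nat.card_sigma, Nat.cast_sum]
  convert! Finset.sum_coe_sort (Finset.univ.finsuppAntidiag n)
    (fun l : ι →₀ ℕ => (Nat.card (∀ i, {y // size i y = l i}) : R)) using 1
  simp only [Nat.card_pi, Nat.cast_prod]

theorem faithfulSMul_polynomial_powerSeries [CommSemiring R] :
    FaithfulSMul (Polynomial R) R⟦X⟧ := by
  refine (faithfulSMul_iff_algebraMap_injective _ _).2 fun p q hpq => ?_
  simpa [algebraMap_apply'] using hpq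

end SizeGF

section Specification

open PowerSeries

/-- Every `y : Y` splits into parts `(parts y).2 : ι s → Y` according to one of finitely many
rules `s = (parts y).1`, and is determined by them. Which tuples of parts occur for a given rule,
and the type `ty y : T` of the result, depend only on the types of the parts. A rule `s` adds
`weight s` to the total size of the parts. -/
structure UnambiguousSpec {Y S T : Type*} {ι : S → Type*} [∀ s, Fintype (ι s)] (size : Y → ℕ)
    (weight : S → ℕ) (parts : Y → Σ s, ι s → Y) (ty : Y → T) : Prop where
  finite_size n : Finite {y // size y = n}
  size_pos y : 0 < size y
  injective : Function.Injective parts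
  size_eq y : size y = weight (parts y).1 + ∑ i, size ((parts y).2 i)
  exists_of_ty_eq y (x : ι (parts y).1 → Y) (h : ∀ i, ty (x i) = ty ((parts y).2 i)) :
    ∃ z, parts z = ⟨(parts y).1, x⟩ ∧ ty z = ty y
  proper s : IsEmpty (ι s) ∨ 2 ≤ weight s + Fintype.card (ι s)

namespace UnambiguousSpec

variable {Y S T : Type*} {ι : S → Type*} [∀ s, Fintype (ι s)] {size : Y → ℕ} {weight : S → ℕ}
  {parts : Y → Σ s, ι s → Y} {ty : Y → T}

variable (parts ty) in
/-- The rule that produces `y`, with the types of the parts of `y`. -/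
def shape (y : Y) : Σ s, ι s → T := ⟨(parts y).1, fun i => ty ((parts y).2 i)⟩

theorem sizeGF_shape_fiber {R : Type*} [CommSemiring R]
    (h : UnambiguousSpec size weight parts ty) (y : Y) :
    sizeGF R (fun z : {z : {z // ty z = ty y} // shape parts ty z = shape parts ty y} => size z) =
      X ^ weight (parts y).1 *
        ∏ i, fiberGF R size ty (ty ((parts y).2 i)) := by
  choose assemble parts_assemble ty_assemble using
    fun x : ∀ i, {z // ty z = ty ((parts y).2 i)} =>
      h.exists_of_ty_eq y (fun i => x i) fun i => (x i).2
  have exists_parts_eq : ∀ z (p : Σ s, ι s → T), shape parts ty z = p →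
      ∃ x : ∀ i, {z // ty z = p.2 i}, parts z = ⟨p.1, fun i => x i⟩ := by
    rintro z _ rfl
    exact ⟨fun i => ⟨(parts z).2 i, rfl⟩, rfl⟩
  have bijective : Function.Bijective fun x => (⟨⟨assemble x, ty_assemble x⟩, by
      rw [shape, parts_assemble]
      exact Sigma.ext rfl (heq_of_eq (funext fun i => (x i).2))⟩ :
      {z : {z // ty z = ty y} // shape parts ty z = shape parts ty y}) := by
    constructor
    · intro x x' hx
      have := congrArg (fun z => parts z.1.1) hx
      simp only [parts_assemble, Sigma.mk.injEq, heq_eq_eq, true_and] at this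
      exact funext fun i => Subtype.ext (congrFun this i)
    · rintro ⟨⟨z, hty⟩, hz⟩
      obtain ⟨x, hx⟩ := exists_parts_eq z _ hz
      exact ⟨x, Subtype.ext (Subtype.ext (h.injective ((parts_assemble x).trans hx.symm)))⟩
  simp only [fiberGF]
  rw [← sizeGF_pi _ fun i => finite_size_restrict h.finite_size _, ← sizeGF_const_add]
  refine (sizeGF_congr (Equiv.ofBijective _ bijective) fun x => ?_).symm
  change size (assemble x) = _
  rw [h.size_eq, parts_assemble]

variable {R : Type*} [CommRing R]

theorem fiberGF_mem_one_sup_sq [Finite S] [Finite T] (h : UnambiguousSpec size weight parts ty)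
    {A : Subalgebra (Polynomial R) R⟦X⟧} (hA : ∀ t, fiberGF R size ty t ∈ A) {m : Ideal A}
    (hm : m = RingHom.ker ((constantCoeff (R := R)).comp A.val.toRingHom)) (t : T) :
    ⟨fiberGF R size ty t, hA t⟩ ∈ (1 : Submodule (Polynomial R) A) ⊔
      (m ^ 2).restrictScalars (Polynomial R) := by
  have := fun s => Fintype.ofFinite (ι s → T)
  cases nonempty_fintype S
  have X_mem : algebraMap (Polynomial R) A .X ∈ m := by
    simp [hm, RingHom.mem_ker, algebraMap_apply']
  have fiberGF_mem (t : T) : ⟨fiberGF R size ty t, hA t⟩ ∈ m := by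
    rw [hm]
    exact constantCoeff_sizeGF fun y => h.size_pos y
  have exists_shape_fiber (p : Σ s, ι s → T) : ∃ a ∈ (1 : Submodule (Polynomial R) A) ⊔
      (m ^ 2).restrictScalars (Polynomial R), (a : R⟦X⟧) =
        sizeGF R (fun z : {z : {z // ty z = t} // shape parts ty z = p} => size z) := by
    rcases isEmpty_or_nonempty {z : {z // ty z = t} // shape parts ty z = p} with
      _ | ⟨⟨⟨y, rfl⟩, rfl⟩⟩
    · exact ⟨0, zero_mem _, (sizeGF_of_isEmpty _).symm⟩
    refine ⟨algebraMap (Polynomial R) A .X ^ weight (parts y).1 *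
      ∏ i, ⟨fiberGF R size ty (ty ((parts y).2 i)), hA _⟩, ?_, ?_⟩
    · rcases h.proper (parts y).1 with _ | h2
      · refine Submodule.mem_sup_left (Submodule.mem_one.2 ⟨.X ^ weight (parts y).1, ?_⟩)
        rw [map_pow, Finset.univ_eq_empty, Finset.prod_empty, mul_one]
      · exact Submodule.mem_sup_right
          (Ideal.pow_le_pow_right h2 (pow_mul_prod_mem_pow X_mem _ fun i => fiberGF_mem _))
    · rw [h.sizeGF_shape_fiber]
      simp [algebraMap_apply']
  choose a ha a_eq using exists_shape_fiber
  convert! sum_mem fun p (_ : p ∈ Finset.univ) => ha p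
  rw [AddSubmonoidClass.coe_finsetSum]
  simp only [a_eq]
  exact sizeGF_eq_sum_fiber (finite_size_restrict h.finite_size _) _

theorem isAlgebraic_fiberGF [IsDomain R] [Finite S] [Finite T]
    (h : UnambiguousSpec size weight parts ty) (t : T) :
    IsAlgebraic (Polynomial R) (fiberGF R size ty t) := by
  let A := Algebra.adjoin (Polynomial R) (Set.range (fiberGF R size ty))
  let g (t : T) : A := ⟨fiberGF R size ty t, Algebra.subset_adjoin ⟨t, rfl⟩⟩
  have adjoin_g : Algebra.adjoin (Polynomial R) (Set.range g) = ⊤ := by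
    convert! Algebra.adjoin_adjoin_coe_preimage (R := Polynomial R)
      (s := Set.range (fiberGF R size ty)) using 2
    ext a
    simp [g, Subtype.ext_iff]
  have := faithfulSMul_polynomial_powerSeries (R := R)
  have : Algebra.IsAlgebraic (Polynomial R) A :=
    isAlgebraic_of_mem_one_sup_sq adjoin_g
      (RingHom.ker_ne_top ((constantCoeff (R := R)).comp A.val.toRingHom))
      (h.fiberGF_mem_one_sup_sq _ rfl)
  exact (Subalgebra.isAlgebraic_iff A).2 this _ (g t).2

theorem isAlgebraic_sizeGF [IsDomain R] [Finite S] [Finite T]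
    (h : UnambiguousSpec size weight parts ty) : IsAlgebraic (Polynomial R) (sizeGF R size) := by
  cases nonempty_fintype T
  rw [sizeGF_eq_sum_fiber h.finite_size ty]
  exact (Subalgebra.algebraicClosure (Polynomial R) R⟦X⟧).sum_mem fun t _ =>
    h.isAlgebraic_fiberGF t

end UnambiguousSpec

end Specification

section Patterns

/-- A permutation together with its length. These are ordered by containment. -/
structure FinPerm where
  length : ℕ
  perm : Perm length

theorem perm_eq_of_lt_iff_lt {n : ℕ} {σ π : Perm n} (h : ∀ i j, π i < π j ↔ σ i < σ j) :
    σ = π := by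
  let e : Fin n ≃o Fin n := .ofRelIsoLT ⟨σ.symm.trans π, fun {i j} => by simp [h]⟩
  have e_eq : e = OrderIso.refl _ := Subsingleton.elim _ _
  ext i
  simpa [e] using congrArg Fin.val (DFunLike.congr_fun e_eq (σ i)).symm

theorem Contains.length_le {m n : ℕ} {σ : Perm m} {π : Perm n} (h : Contains σ π) : m ≤ n := by
  obtain ⟨f, hf, -⟩ := h
  simpa using Fintype.card_le_of_injective f hf.injective

theorem Contains.eq {n : ℕ} {σ π : Perm n} (h : Contains σ π) : σ = π := by
  obtain ⟨f, hf, hlt⟩ := h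
  obtain rfl : f = id := funext fun i => le_antisymm hf.apply_le hf.le_apply
  exact perm_eq_of_lt_iff_lt hlt

instance : PartialOrder FinPerm where
  le p q := Contains p.perm q.perm
  le_refl _ := ⟨id, strictMono_id, fun _ _ => Iff.rfl⟩
  le_trans _ _ _ := fun ⟨f, hf, hf'⟩ ⟨g, hg, hg'⟩ =>
    ⟨g ∘ f, hg.comp hf, fun _ _ => (hg' _ _).trans (hf' _ _)⟩
  le_antisymm := fun ⟨m, σ⟩ ⟨n, π⟩ h h' => by
    obtain rfl : m = n := le_antisymm h.length_le h'.length_le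
    exact congrArg _ (Contains.eq h)

theorem exists_standardization {X L : Type*} [LinearOrder X] [Finite X] [LinearOrder L]
    {b : X → L} (hb : Function.Injective b) :
    ∃ (p : FinPerm) (e : Fin p.length ≃o X), ∀ i j, p.perm i < p.perm j ↔ b (e i) < b (e j) := by
  classical
  cases nonempty_fintype X
  let e := Fintype.orderIsoFinOfCardEq X rfl
  let e' := Fintype.orderIsoFinOfCardEq (Set.range b) (Set.card_range_of_injective hb)
  refine ⟨⟨_, (e.toEquiv.trans (Equiv.ofInjective b hb)).trans e'.symm.toEquiv⟩, e, fun i j => ?_⟩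
  exact e'.symm.lt_iff_lt

/-- The points of `π` with indices in `F` form the pattern `p`. -/
def IsPattern {n : ℕ} (π : Perm n) (F : Set (Fin n)) (p : FinPerm) : Prop :=
  ∃ e : Fin p.length ≃o F, ∀ x y, π (e x) < π (e y) ↔ p.perm x < p.perm y

theorem exists_isPattern {n : ℕ} (π : Perm n) (F : Set (Fin n)) : ∃ p, IsPattern π F p := by
  obtain ⟨p, e, he⟩ := exists_standardization
    (π.injective.comp (Subtype.val_injective (p := (· ∈ F))))
  exact ⟨p, e, fun x y => (he x y).symm⟩

namespace IsPattern

variable {m n : ℕ} {σ : Perm m} {π : Perm n} {F : Set (Fin m)} {G : Set (Fin n)} {p q : FinPerm}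

theorem le_iff (hp : IsPattern σ F p) (hq : IsPattern π G q) :
    p ≤ q ↔ ∃ f : F → G, StrictMono f ∧ ∀ s t, π (f s) < π (f t) ↔ σ s < σ t := by
  obtain ⟨e, he⟩ := hp
  obtain ⟨e', he'⟩ := hq
  constructor
  · rintro ⟨f, hf, hlt⟩
    refine ⟨fun s => e' (f (e.symm s)), e'.strictMono.comp (hf.comp e.symm.strictMono),
      fun s t => ?_⟩
    rw [he', hlt, ← he, e.apply_symm_apply, e.apply_symm_apply]
  · rintro ⟨f, hf, hlt⟩
    refine ⟨fun x => e'.symm (f (e x)), e'.symm.strictMono.comp (hf.comp e.strictMono),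
      fun x y => ?_⟩
    rw [← he', e'.apply_symm_apply, e'.apply_symm_apply, hlt, he]

theorem le (h : IsPattern π G q) : q ≤ ⟨n, π⟩ := by
  obtain ⟨e, he⟩ := h
  exact ⟨fun x => e x, e.strictMono, he⟩

theorem unique (hp : IsPattern π G p) (hq : IsPattern π G q) : p = q :=
  le_antisymm ((hp.le_iff hq).2 ⟨id, strictMono_id, fun _ _ => Iff.rfl⟩)
    ((hq.le_iff hp).2 ⟨id, strictMono_id, fun _ _ => Iff.rfl⟩)

theorem ncard_eq (h : IsPattern π G q) : G.ncard = q.length := by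
  obtain ⟨e, -⟩ := h
  rw [← Nat.card_coe_set_eq, ← Nat.card_congr e.toEquiv, Nat.card_fin]

end IsPattern

end Patterns

section Inflations

/-- The fibres of `b` are the blocks of a decomposition of `π` as an inflation of `σ`. -/
structure IsBlockMap {m n : ℕ} (σ : Perm m) (π : Perm n) (b : Fin n → Fin m) : Prop where
  monotone : Monotone b
  surjective : Function.Surjective b
  lt_iff_lt : ∀ i j, b i ≠ b j → (π i < π j ↔ σ (b i) < σ (b j))

/-- `p` is the inflation of `σ` by the permutations `α c`, replacing each point of `σ` by a block
that forms the pattern `α c`. -/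
def IsInflation {m : ℕ} (σ : Perm m) (α : Fin m → FinPerm) (p : FinPerm) : Prop :=
  ∃ b, IsBlockMap σ p.perm b ∧ ∀ c, IsPattern p.perm {i | b i = c} (α c)

theorem isBlockMap_id {n : ℕ} (π : Perm n) : IsBlockMap π π id :=
  ⟨monotone_id, Function.surjective_id, fun _ _ _ => Iff.rfl⟩

namespace IsBlockMap

variable {l m n : ℕ} {ρ : Perm l} {σ : Perm m} {π : Perm n} {b : Fin n → Fin m}

theorem comp {q : Fin m → Fin l} (hq : IsBlockMap ρ σ q) (hb : IsBlockMap σ π b) :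
    IsBlockMap ρ π (q ∘ b) :=
  ⟨hq.monotone.comp hb.monotone, hq.surjective.comp hb.surjective, fun i j h =>
    (hb.lt_iff_lt i j fun h' => h (congrArg q h')).trans (hq.lt_iff_lt _ _ h)⟩

theorem contains (hb : IsBlockMap σ π b) : Contains σ π := by
  choose e he using hb.surjective
  refine ⟨e, fun c d h => hb.monotone.reflect_lt (by rwa [he, he]), fun c d => ?_⟩
  rcases eq_or_ne c d with rfl | h
  · simp
  · rw [hb.lt_iff_lt _ _ (by rwa [he, he]), he, he]

end IsBlockMap

theorem exists_isInflation {m : ℕ} (σ : Perm m) (α : Fin m → FinPerm)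
    (hα : ∀ c, 0 < (α c).length) : ∃ p, IsInflation σ α p := by
  let v (x : Σₗ c, Fin (α c).length) : Fin m ×ₗ ℕ :=
    toLex (σ (ofLex x).1, (α (ofLex x).1).perm (ofLex x).2)
  have hv : Function.Injective v := fun x y hxy => by
    obtain ⟨⟨c, x⟩, rfl⟩ := toLex.surjective x
    obtain ⟨⟨d, y⟩, rfl⟩ := toLex.surjective y
    obtain ⟨hσ, hα⟩ := Prod.ext_iff.1 (toLex.injective hxy)
    obtain rfl : c = d := σ.injective hσ
    obtain rfl : x = y := (α c).perm.injective (Fin.ext hα)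
    rfl
  obtain ⟨p, e, h⟩ := exists_standardization hv
  let b (i : Fin p.length) : Fin m := (ofLex (e i)).1
  have b_symm (c x) : b (e.symm (toLex ⟨c, x⟩)) = c := by simp [b]
  refine ⟨p, b, ⟨fun i j hij => ?_, fun c => ⟨_, b_symm c ⟨0, hα c⟩⟩, fun i j hij => ?_⟩,
    fun c => ⟨StrictMono.orderIsoOfSurjective (fun x => ⟨e.symm (toLex ⟨c, x⟩), b_symm c x⟩)
      (fun x y hxy => e.symm.strictMono ?_) ?_, fun x y => ?_⟩⟩
  · exact (Sigma.Lex.le_def.1 (e.monotone hij)).elim le_of_lt fun h => h.1.le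
  · have : σ (b i) ≠ σ (b j) := σ.injective.ne hij
    rw [h, Prod.Lex.toLex_lt_toLex]
    exact ⟨fun h => h.resolve_right fun h => this h.1, Or.inl⟩
  · exact Sigma.Lex.right _ _ hxy
  · rintro ⟨i, rfl⟩
    exact ⟨(ofLex (e i)).2, Subtype.ext (e.symm_apply_apply i)⟩
  · have e_symm (x) : e (e.symm (toLex ⟨c, x⟩)) = toLex ⟨c, x⟩ := e.apply_symm_apply _
    change p.perm (e.symm (toLex ⟨c, x⟩)) < p.perm (e.symm (toLex ⟨c, y⟩)) ↔ _
    rw [h, e_symm, e_symm]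
    exact Prod.Lex.toLex_lt_toLex.trans
      ((or_iff_right (lt_irrefl _)).trans (and_iff_right rfl))

/-- `σ` is a quotient of `π`, that is, `π` is an inflation of `σ`. -/
def IsQuotient {m n : ℕ} (σ : Perm m) (π : Perm n) : Prop :=
  ∃ b, IsBlockMap σ π b

namespace IsInflation

variable {m : ℕ} {σ : Perm m} {α β : Fin m → FinPerm} {p q : FinPerm}

theorem length_eq (h : IsInflation σ α p) : p.length = ∑ c, (α c).length := by
  classical
  obtain ⟨b, -, h⟩ := h
  calc p.length = ∑ c, (Finset.univ.filter fun i => b i = c).card := by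
        rw [← Finset.card_eq_sum_card_fiberwise (by simp), Finset.card_univ, Fintype.card_fin]
    _ = ∑ c, (α c).length := Finset.sum_congr rfl fun c _ => by
        rw [← (h c).ncard_eq, ← Set.ncard_coe_finset]
        simp

/-- An occurrence of `t` in `p` splits into patterns of the components `α c`, which can be moved
separately into the components `β c`. -/
theorem le_of_forall_le (hp : IsInflation σ α p) (hq : IsInflation σ β q) {N : ℕ}
    (hαβ : ∀ c, ∀ t : FinPerm, t.length ≤ N → t ≤ α c → t ≤ β c) {t : FinPerm}
    (ht : t.length ≤ N) (htp : t ≤ p) : t ≤ q := by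
  obtain ⟨b, hb, hp⟩ := hp
  obtain ⟨b', hb', hq⟩ := hq
  obtain ⟨f, hf, hlt⟩ := htp
  choose ρ hρ using fun c => exists_isPattern t.perm {s | b (f s) = c}
  have ρ_le_α (c) : ρ c ≤ α c :=
    ((hρ c).le_iff (hp c)).2 ⟨fun s => ⟨f s, s.2⟩, fun _ _ h => hf h, fun _ _ => hlt _ _⟩
  have ρ_le_β (c) : ρ c ≤ β c := hαβ c _ ((hρ c).le.length_le.trans ht) (ρ_le_α c)
  choose g hg hglt using fun c => ((hρ c).le_iff (hq c)).1 (ρ_le_β c)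
  let g' (s) : Fin q.length := g (b (f s)) ⟨s, rfl⟩
  have b'_g' (s) : b' (g' s) = b (f s) := (g _ ⟨s, rfl⟩).2
  have g'_eq {c s} (hs : b (f s) = c) : g' s = g c ⟨s, hs⟩ := by subst hs; rfl
  refine ⟨g', fun s t hst => ?_, fun s t => ?_⟩
  · rcases (hb.monotone (hf hst).le).lt_or_eq with h | h
    · exact hb'.monotone.reflect_lt (by rwa [b'_g', b'_g'])
    · rw [g'_eq h]
      exact hg _ hst
  · rcases eq_or_ne (b (f s)) (b (f t)) with h | h
    · rw [g'_eq h]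
      exact hglt _ _ _
    · rw [hb'.lt_iff_lt _ _ (by rwa [b'_g', b'_g']), b'_g', b'_g', ← hb.lt_iff_lt _ _ h, hlt]

theorem mono (hp : IsInflation σ α p) (hq : IsInflation σ β q) (h : ∀ c, α c ≤ β c) : p ≤ q :=
  hp.le_of_forall_le hq (fun c _ _ ht => ht.trans (h c)) le_rfl le_rfl

theorem unique (hp : IsInflation σ α p) (hq : IsInflation σ α q) : p = q :=
  le_antisymm (hp.mono hq fun _ => le_rfl) (hq.mono hp fun _ => le_rfl)

end IsInflation

end Inflations

section SimpleQuotients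

variable {m m' n : ℕ} {σ : Perm m} {σ' : Perm m'} {π : Perm n} {b : Fin n → Fin m}
  {b' : Fin n → Fin m'}

theorem IsPattern.isQuotient {p : FinPerm} {κ : Fin n → Fin n}
    (hp : IsPattern π (Set.range κ) p) (hκ : Monotone κ)
    (hlt : ∀ i j, κ i ≠ κ j → (π i < π j ↔ π (κ i) < π (κ j))) : IsQuotient p.perm π := by
  obtain ⟨e, he⟩ := hp
  refine ⟨fun i => e.symm ⟨κ i, i, rfl⟩, fun i j hij => e.symm.monotone (hκ hij), fun x => ?_,
    fun i j hij => ?_⟩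
  · obtain ⟨i, hi⟩ := (e x).2
    exact ⟨i, by rw [e.symm_apply_eq]; exact Subtype.ext hi⟩
  · rw [← he, e.apply_symm_apply, e.apply_symm_apply]
    exact hlt i j fun h => hij (by simp only [h])

theorem IsRange.lt_iff_lt_left {I : Finset (Fin n)} (hI : IsRange I) {x y z : Fin n}
    (hx : x ∈ I) (hy : y ∈ I) (hz : z ∉ I) : x < z ↔ y < z :=
  ⟨fun h => lt_of_not_ge fun h' => hz (hI hx hy h.le h'),
    fun h => lt_of_not_ge fun h' => hz (hI hy hx h.le h')⟩

theorem IsRange.lt_iff_lt_right {I : Finset (Fin n)} (hI : IsRange I) {x y z : Fin n}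
    (hx : x ∈ I) (hy : y ∈ I) (hz : z ∉ I) : z < x ↔ z < y :=
  ⟨fun h => lt_of_not_ge fun h' => hz (hI hy hx h' h.le),
    fun h => lt_of_not_ge fun h' => hz (hI hx hy h' h.le)⟩

theorem IsPermInterval.exists_isQuotient {I : Finset (Fin n)} (hI : IsPermInterval π I)
    (one_lt : 1 < I.card) (card_ne : I.card ≠ n) :
    ∃ p : FinPerm, 2 ≤ p.length ∧ p.length < n ∧ IsQuotient p.perm π := by
  obtain ⟨x, hx, y, hy, hxy⟩ := Finset.one_lt_card.1 one_lt
  obtain ⟨z, hz⟩ : ∃ z, z ∉ I := by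
    by_contra! h
    exact card_ne (by rw [Finset.eq_univ_iff_forall.2 h, Finset.card_univ, Fintype.card_fin])
  have mem_image {i} : π i ∈ I.image π ↔ i ∈ I := π.injective.mem_finset_image
  let κ (i : Fin n) : Fin n := if i ∈ I then x else i
  have κ_of_mem {i} (hi : i ∈ I) : κ i = x := if_pos hi
  have κ_of_notMem {i} (hi : i ∉ I) : κ i = i := if_neg hi
  obtain ⟨p, hp⟩ := exists_isPattern π (Set.range κ)
  refine ⟨p, ?_, ?_, hp.isQuotient (fun i j hij => ?_) fun i j hij => ?_⟩
  · rw [← hp.ncard_eq]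
    exact (Set.one_lt_ncard).2 ⟨x, ⟨x, κ_of_mem hx⟩, z, ⟨z, κ_of_notMem hz⟩, fun h => hz (h ▸ hx)⟩
  · rw [← hp.ncard_eq]
    refine (Set.ncard_lt_card fun h => ?_).trans_eq (Nat.card_fin n)
    obtain ⟨i, hi⟩ : y ∈ Set.range κ := h ▸ Set.mem_univ y
    by_cases h : i ∈ I
    · exact hxy (by rw [← hi, κ_of_mem h])
    · exact h (by rwa [← κ_of_notMem h, hi])
  · by_cases hi : i ∈ I <;> by_cases hj : j ∈ I
    · rw [κ_of_mem hi, κ_of_mem hj]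
    · rw [κ_of_mem hi, κ_of_notMem hj, ← not_lt, hI.1.lt_iff_lt_right hx hi hj]
      exact hij.not_gt
    · rw [κ_of_notMem hi, κ_of_mem hj, ← not_lt, hI.1.lt_iff_lt_left hx hj hi]
      exact hij.not_gt
    · rwa [κ_of_notMem hi, κ_of_notMem hj]
  · by_cases hi : i ∈ I <;> by_cases hj : j ∈ I
    · exact absurd ((κ_of_mem hi).trans (κ_of_mem hj).symm) hij
    · rw [κ_of_mem hi, κ_of_notMem hj]
      exact hI.2.lt_iff_lt_left (mem_image.2 hi) (mem_image.2 hx) (mt mem_image.1 hj)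
    · rw [κ_of_notMem hi, κ_of_mem hj]
      exact hI.2.lt_iff_lt_right (mem_image.2 hj) (mem_image.2 hx) (mt mem_image.1 hi)
    · rw [κ_of_notMem hi, κ_of_notMem hj]

theorem exists_isSimple_isQuotient (π : Perm n) (hn : 2 ≤ n) :
    ∃ s : FinPerm, 2 ≤ s.length ∧ IsSimple s.perm ∧ IsQuotient s.perm π := by
  induction n using Nat.strong_induction_on with
  | _ n ih =>
    by_cases h : IsSimple π
    · exact ⟨⟨n, π⟩, hn, h, id, isBlockMap_id π⟩
    · simp only [IsSimple, not_forall, not_or, not_le] at h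
      obtain ⟨I, hI, one_lt, card_ne⟩ := h
      obtain ⟨p, hp, p_lt, q, hq⟩ := hI.exists_isQuotient one_lt card_ne
      obtain ⟨s, hs, s_simple, b, hb⟩ := ih p.length p_lt p.perm hp
      exact ⟨s, hs, s_simple, b ∘ q, hb.comp hq⟩

/-- The point of `π` with index `k` lies between those with indices `i` and `l`, horizontally from
left to right or vertically from bottom to top. Intervals are the sets closed under this relation,
and block maps both preserve and reflect it. -/
def Between (π : Perm n) (i k l : Fin n) : Prop :=
  i < k ∧ k < l ∨ π i < π k ∧ π k < π l

theorem isPermInterval_of_between {I : Finset (Fin n)}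
    (h : ∀ i k l, i ∈ I → l ∈ I → Between π i k l → k ∈ I) : IsPermInterval π I := by
  have mem_of_le {X : Finset (Fin n)} (hX : ∀ i k l, i ∈ X → l ∈ X → i < k → k < l → k ∈ X) :
      IsRange X := fun i k l hi hl hik hkl => by
    rcases hik.eq_or_lt with rfl | hik
    · exact hi
    rcases hkl.eq_or_lt with rfl | hkl
    · exact hl
    exact hX i k l hi hl hik hkl
  refine ⟨mem_of_le fun i k l hi hl hik hkl => h i k l hi hl (Or.inl ⟨hik, hkl⟩),
    mem_of_le ?_⟩
  intro x y z hx hz hxy hyz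
  obtain ⟨k, rfl⟩ := π.surjective y
  obtain ⟨i, hi, rfl⟩ := Finset.mem_image.1 hx
  obtain ⟨l, hl, rfl⟩ := Finset.mem_image.1 hz
  exact Finset.mem_image_of_mem _ (h i k l hi hl (Or.inr ⟨hxy, hyz⟩))

namespace IsBlockMap

theorem eq_of_between (hb : IsBlockMap σ π b) {i k l : Fin n} (hil : b i = b l)
    (h : Between π i k l) : b k = b i := by
  rcases h with ⟨hik, hkl⟩ | ⟨hik, hkl⟩
  · exact le_antisymm ((hb.monotone hkl.le).trans hil.ge) (hb.monotone hik.le)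
  · by_contra hne
    rw [hb.lt_iff_lt _ _ (Ne.symm hne)] at hik
    rw [hb.lt_iff_lt _ _ (by rwa [← hil]), ← hil] at hkl
    exact lt_asymm hik hkl

theorem between_of_between (hb : IsBlockMap σ π b) {i k l : Fin n}
    (h : Between σ (b i) (b k) (b l)) : Between π i k l := by
  refine h.imp (fun h => h.imp hb.monotone.reflect_lt hb.monotone.reflect_lt) fun h => ?_
  rwa [hb.lt_iff_lt i k fun h' => h.1.ne (by rw [h']),
    hb.lt_iff_lt k l fun h' => h.2.ne (by rw [h'])]

theorem isPermInterval_image_fiber (hb : IsBlockMap σ π b) (hb' : IsBlockMap σ' π b')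
    (c : Fin m') : IsPermInterval σ (({k | b' k = c} : Finset (Fin n)).image b) := by
  refine isPermInterval_of_between fun x y z hx hz h => ?_
  simp only [Finset.mem_image, Finset.mem_filter_univ] at hx hz ⊢
  obtain ⟨i, rfl, rfl⟩ := hx
  obtain ⟨l, hl, rfl⟩ := hz
  obtain ⟨k, rfl⟩ := hb.surjective y
  exact ⟨k, hb'.eq_of_between hl.symm (hb.between_of_between h), rfl⟩

theorem isPermInterval_erase_of_fiber (hb : IsBlockMap σ π b) (hb' : IsBlockMap σ' π b')
    {c : Fin m'} (hc : ∀ x, ∃ i, b' i = c ∧ b i = x) {k : Fin n} (hk : b' k ≠ c) :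
    IsPermInterval σ (Finset.univ.erase (b k)) := by
  refine isPermInterval_of_between fun x y z _ _ h => ?_
  obtain ⟨i, rfl, rfl⟩ := hc x
  obtain ⟨l, hl, rfl⟩ := hc z
  refine Finset.mem_erase.2 ⟨?_, Finset.mem_univ _⟩
  rintro rfl
  exact hk (hb'.eq_of_between hl.symm (hb.between_of_between h))

theorem eq_of_eq (hb : IsBlockMap σ π b) (hb' : IsBlockMap σ' π b') (hσ : IsSimple σ)
    (hm : 3 ≤ m) (hm' : 2 ≤ m') {i j : Fin n} (hij : b' i = b' j) : b i = b j := by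
  have mem_image (x) : x ∈ ({k | b' k = b' i} : Finset (Fin n)).image b ↔
      ∃ k, b' k = b' i ∧ b k = x := by simp
  rcases hσ _ (hb.isPermInterval_image_fiber hb' (b' i)) with card_le | card_eq
  · exact Finset.card_le_one.1 card_le _ ((mem_image _).2 ⟨i, rfl, rfl⟩)
      _ ((mem_image _).2 ⟨j, hij.symm, rfl⟩)
  · have eq_univ := (Finset.card_eq_iff_eq_univ _).1 (card_eq.trans (Fintype.card_fin m).symm)
    have : Nontrivial (Fin m') := Fin.nontrivial_iff_two_le.2 hm'
    obtain ⟨c, hc⟩ := exists_ne (b' i)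
    obtain ⟨k, rfl⟩ := hb'.surjective c
    have := hσ _ (hb.isPermInterval_erase_of_fiber hb'
      (fun x => (mem_image x).1 (eq_univ ▸ Finset.mem_univ x)) hc)
    rw [Finset.card_erase_of_mem (Finset.mem_univ _), Finset.card_univ, Fintype.card_fin] at this
    lia

theorem exists_factor (hb : IsBlockMap σ π b) (hb' : IsBlockMap σ' π b')
    (h : ∀ i j, b' i = b' j → b i = b j) : ∃ g, IsBlockMap σ σ' g ∧ g ∘ b' = b := by
  choose r hr using hb'.surjective
  have b_r (i) : b (r (b' i)) = b i := h _ _ (hr _)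
  refine ⟨fun c => b (r c), ⟨fun c d hcd => ?_, fun c => ?_, fun c d hcd => ?_⟩, funext b_r⟩
  · rcases hcd.eq_or_lt with rfl | hcd
    · exact le_rfl
    · exact hb.monotone (hb'.monotone.reflect_lt (by rwa [hr, hr])).le
  · obtain ⟨i, rfl⟩ := hb.surjective c
    exact ⟨b' i, b_r i⟩
  · have : c ≠ d := fun h => hcd (by rw [h])
    rw [← hb.lt_iff_lt _ _ hcd, hb'.lt_iff_lt _ _ (by rwa [hr, hr]), hr, hr]

theorem eq_of_isSimple {b b' : Fin n → Fin m} (hb : IsBlockMap σ π b) (hb' : IsBlockMap σ π b')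
    (hσ : IsSimple σ) (hm : 3 ≤ m) : b = b' := by
  obtain ⟨g, hg, rfl⟩ := hb.exists_factor hb' fun i j => hb.eq_of_eq hb' hσ hm (by lia)
  have g_eq : g = id := (StrictMono.range_inj (hg.monotone.strictMono_of_injective
    (Finite.injective_iff_surjective.2 hg.surjective)) strictMono_id).1
    (by rw [hg.surjective.range_eq, Set.range_id])
  rw [g_eq, Function.id_comp]

end IsBlockMap

theorem IsQuotient.lt_iff_lt {σ : Perm (m + 2)} {π : Perm (n + 1)} (h : IsQuotient σ π) :
    σ 0 < σ (Fin.last _) ↔ π 0 < π (Fin.last _) := by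
  obtain ⟨b, hb⟩ := h
  have b_zero : b 0 = 0 := by
    obtain ⟨i, hi⟩ := hb.surjective 0
    exact le_antisymm (hi ▸ hb.monotone (Fin.zero_le i)) (Fin.zero_le _)
  have b_last : b (Fin.last _) = Fin.last _ := by
    obtain ⟨i, hi⟩ := hb.surjective (Fin.last _)
    exact le_antisymm (Fin.le_last _) (hi ▸ hb.monotone (Fin.le_last i))
  have : (0 : Fin (m + 2)) ≠ Fin.last _ := Fin.last_pos.ne
  rw [hb.lt_iff_lt _ _ (by rwa [b_zero, b_last]), b_zero, b_last]

theorem IsQuotient.contains_of_isSimple (h : IsQuotient σ π) (h' : IsQuotient σ' π)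
    (hσ : IsSimple σ) (hm : 3 ≤ m) (hm' : 2 ≤ m') : Contains σ σ' := by
  obtain ⟨b, hb⟩ := h
  obtain ⟨b', hb'⟩ := h'
  obtain ⟨g, hg, -⟩ := hb.exists_factor hb' fun i j => hb.eq_of_eq hb' hσ hm hm'
  exact hg.contains

/-- The simple quotient of a permutation. -/
structure FinPerm.IsSimpleQuotient (s : FinPerm) (π : Perm n) : Prop where
  two_le : 2 ≤ s.length
  isSimple : IsSimple s.perm
  isQuotient : IsQuotient s.perm π

theorem FinPerm.IsSimpleQuotient.le {s t : FinPerm} (hs : s.IsSimpleQuotient π)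
    (ht : t.IsSimpleQuotient π) (three_le : 3 ≤ s.length) : s ≤ t :=
  hs.isQuotient.contains_of_isSimple ht.isQuotient hs.isSimple three_le ht.two_le

theorem FinPerm.IsSimpleQuotient.unique {s t : FinPerm} (hs : s.IsSimpleQuotient π)
    (ht : t.IsSimpleQuotient π) : s = t := by
  rcases hs.two_le.lt_or_eq' with hs3 | hs2
  · have hst := hs.le ht hs3
    exact le_antisymm hst (ht.le hs (hs3.trans_le hst.length_le))
  rcases ht.two_le.lt_or_eq' with ht3 | ht2
  · have hts := ht.le hs ht3
    exact le_antisymm (hs.le ht (ht3.trans_le hts.length_le)) hts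
  obtain ⟨_, σ⟩ := s
  obtain ⟨_, τ⟩ := t
  obtain rfl : _ = 2 := hs2
  obtain rfl : _ = 2 := ht2
  obtain ⟨n, rfl⟩ : ∃ k, n = k + 1 := by
    obtain ⟨b, hb⟩ := hs.isQuotient
    exact Nat.exists_eq_add_one.2 (Fin.pos (hb.surjective 0).choose)
  have perm_two_eq : ∀ σ τ : Perm 2, (σ 0 < σ 1 ↔ τ 0 < τ 1) → σ = τ := by decide
  exact congrArg _ (perm_two_eq σ τ (hs.isQuotient.lt_iff_lt.trans ht.isQuotient.lt_iff_lt.symm))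

end SimpleQuotients

section CanonicalBlocks

variable {m n : ℕ} {π : Perm n}

theorem fin_two_le_total_of_monotone {X : Type*} [LinearOrder X] {b b' : X → Fin 2}
    (hb : Monotone b) (hb' : Monotone b') : b ≤ b' ∨ b' ≤ b := by
  by_contra! h
  simp only [Pi.le_def, not_forall, not_le] at h
  obtain ⟨⟨i, hi⟩, j, hj⟩ := h
  have hij : b j < b i := by lia
  have hji : b' i < b' j := by lia
  exact lt_asymm (hb.reflect_lt hij) (hb'.reflect_lt hji)

/-- Among the block maps to `σ`, the canonical one. If `σ` is simple, then there is a choice only if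
`σ` has length two, and then the greatest block map is the one whose first block is smallest. -/
def IsCanonicalBlockMap (σ : Perm m) (π : Perm n) (b : Fin n → Fin m) : Prop :=
  IsGreatest {b | IsBlockMap σ π b} b

theorem FinPerm.IsSimpleQuotient.exists_isCanonicalBlockMap {s : FinPerm}
    (hs : s.IsSimpleQuotient π) : ∃ b, IsCanonicalBlockMap s.perm π b := by
  obtain ⟨b, hb, le_b⟩ := (Set.toFinite {b | IsBlockMap s.perm π b}).exists_maximal hs.isQuotient
  refine ⟨b, hb, fun b' hb' => ?_⟩
  rcases hs.two_le.lt_or_eq' with hs3 | hs2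
  · exact (hb'.eq_of_isSimple hb hs.isSimple hs3).le
  · obtain ⟨_, σ⟩ := s
    obtain rfl : _ = 2 := hs2
    exact (fin_two_le_total_of_monotone hb.monotone hb'.monotone).elim (le_b hb') id

theorem isBlockMap_fin_two {σ : Perm 2} {b : Fin n → Fin 2} (hb : Monotone b)
    (h0 : ∃ i, b i = 0) (h1 : ∃ i, b i = 1)
    (hlt : ∀ i j, b i = 0 → b j = 1 → (π i < π j ↔ σ 0 < σ 1)) : IsBlockMap σ π b := by
  refine ⟨hb, Fin.forall_fin_two.2 ⟨h0, h1⟩, fun i j hij => ?_⟩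
  have eq_zero_or_eq_one : ∀ c : Fin 2, c = 0 ∨ c = 1 := by decide
  rcases eq_zero_or_eq_one (b i) with hi | hi <;> rcases eq_zero_or_eq_one (b j) with hj | hj
  · exact absurd (hi.trans hj.symm) hij
  · rw [hi, hj, hlt i j hi hj]
  · have hπ : π i ≠ π j := π.injective.ne fun h => hij (by rw [h])
    have hσ : σ 1 ≠ σ 0 := σ.injective.ne one_ne_zero
    rw [hi, hj, ← hπ.le_iff_lt, ← hσ.le_iff_lt, ← not_lt, ← not_lt, hlt j i hj hi]
  · exact absurd (hi.trans hj.symm) hij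

variable {σ : Perm 2} {b : Fin n → Fin 2} {p : FinPerm}

theorem IsBlockMap.of_refine_zero {b' : Fin n → Fin 2} {q : Fin p.length → Fin 2}
    (hb : IsBlockMap σ π b) (e : Fin p.length ≃o {i | b i = 0})
    (he : ∀ x y, π (e x) < π (e y) ↔ p.perm x < p.perm y) (hq : IsBlockMap σ p.perm q)
    (b'_e : ∀ x, b' (e x) = q x) (b'_of_ne : ∀ i, b i ≠ 0 → b' i = 1) : IsBlockMap σ π b' := by
  have exists_e {i} (h : b i = 0) : ∃ x, (e x : Fin n) = i := ⟨e.symm ⟨i, h⟩, by simp⟩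
  have b_e (x) : b (e x) = 0 := (e x).2
  obtain ⟨x, hx⟩ := hq.surjective 0
  obtain ⟨y, hy⟩ := hq.surjective 1
  refine isBlockMap_fin_two (fun i j hij => ?_) ⟨e x, (b'_e x).trans hx⟩
    ⟨e y, (b'_e y).trans hy⟩ fun i j hi hj => ?_
  · by_cases hj : b j = 0
    · obtain ⟨u, rfl⟩ := exists_e (Fin.le_zero_iff.1 (hj ▸ hb.monotone hij))
      obtain ⟨v, rfl⟩ := exists_e hj
      rw [b'_e, b'_e]
      exact hq.monotone (e.le_iff_le.1 hij)
    · rw [b'_of_ne j hj]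
      exact Fin.le_last _
  · obtain ⟨u, rfl⟩ := exists_e (by
      by_contra h
      exact zero_ne_one (hi.symm.trans (b'_of_ne i h)))
    rw [b'_e] at hi
    by_cases hj0 : b j = 0
    · obtain ⟨v, rfl⟩ := exists_e hj0
      rw [b'_e] at hj
      rw [he, hq.lt_iff_lt _ _ (by rw [hi, hj]; exact zero_ne_one), hi, hj]
    · rw [hb.lt_iff_lt _ _ (by rw [b_e]; exact Ne.symm hj0), b_e, Fin.eq_one_of_ne_zero _ hj0]

theorem IsBlockMap.exists_lt_of_isQuotient (hb : IsBlockMap σ π b)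
    (hp : IsPattern π {i | b i = 0} p) (h : IsQuotient σ p.perm) :
    ∃ b', IsBlockMap σ π b' ∧ b < b' := by
  obtain ⟨e, he⟩ := hp
  obtain ⟨q, hq⟩ := h
  obtain ⟨y, hy⟩ := hq.surjective 1
  let b' (i : Fin n) : Fin 2 := if h : b i = 0 then q (e.symm ⟨i, h⟩) else 1
  have b_e (x) : b (e x) = 0 := (e x).2
  have b'_e (x) : b' (e x) = q x := (dif_pos (b_e x)).trans (by simp)
  have b'_of_ne (i) (h : b i ≠ 0) : b' i = 1 := dif_neg h
  refine ⟨b', hb.of_refine_zero e he hq b'_e b'_of_ne, Pi.lt_def.2 ⟨fun i => ?_, e y, ?_⟩⟩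
  · by_cases h : b i = 0
    · rw [h]
      exact Fin.zero_le _
    · rw [b'_of_ne i h]
      exact Fin.le_last _
  · rw [b_e, b'_e, hy]
    exact Fin.zero_lt_one

theorem IsBlockMap.isQuotient_of_not_le {b' : Fin n → Fin 2} (hb : IsBlockMap σ π b)
    (hb' : IsBlockMap σ π b') (hp : IsPattern π {i | b i = 0} p) (h : ¬ b' ≤ b) :
    IsQuotient σ p.perm := by
  obtain ⟨e, he⟩ := hp
  obtain ⟨j, hj⟩ := not_forall.1 h
  have hj0 : b j = 0 := by lia
  have hj1 : b' j = 1 := by lia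
  obtain ⟨i, hi⟩ := hb'.surjective 0
  have hij : i < j := hb'.monotone.reflect_lt (by rw [hi, hj1]; exact Fin.zero_lt_one)
  have hi0 : b i = 0 := Fin.le_zero_iff.1 (hj0 ▸ hb.monotone hij.le)
  refine ⟨fun x => b' (e x), hb'.monotone.comp e.monotone, Fin.forall_fin_two.2
    ⟨⟨e.symm ⟨i, hi0⟩, by simpa using hi⟩, ⟨e.symm ⟨j, hj0⟩, by simpa using hj1⟩⟩,
    fun x y hxy => ?_⟩
  rw [← he, hb'.lt_iff_lt _ _ hxy]

theorem IsBlockMap.isCanonicalBlockMap_iff (hb : IsBlockMap σ π b)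
    (hp : IsPattern π {i | b i = 0} p) :
    IsCanonicalBlockMap σ π b ↔ ¬ IsQuotient σ p.perm := by
  refine ⟨fun h hq => ?_, fun h => ⟨hb, fun b' hb' => ?_⟩⟩
  · obtain ⟨b', hb', hlt⟩ := hb.exists_lt_of_isQuotient hp hq
    exact hlt.not_ge (h.2 hb')
  · by_contra hle
    exact h (hb.isQuotient_of_not_le hb' hp hle)

theorem IsCanonicalBlockMap.of_isQuotient_iff {n' : ℕ} {s : FinPerm} {π' : Perm n'}
    {b : Fin n → Fin s.length} {b' : Fin n' → Fin s.length} {α α' : Fin s.length → FinPerm}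
    (hb : IsCanonicalBlockMap s.perm π b) (hs : s.IsSimpleQuotient π)
    (hb' : IsBlockMap s.perm π' b')
    (hα : ∀ c, IsPattern π {i | b i = c} (α c)) (hα' : ∀ c, IsPattern π' {i | b' i = c} (α' c))
    (h : ∀ c, IsQuotient s.perm (α c).perm ↔ IsQuotient s.perm (α' c).perm) :
    IsCanonicalBlockMap s.perm π' b' := by
  rcases hs.two_le.lt_or_eq' with hs3 | hs2
  · exact ⟨hb', fun b'' hb'' => (hb''.eq_of_isSimple hb' hs.isSimple hs3).le⟩
  · obtain ⟨_, σ⟩ := s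
    obtain rfl : _ = 2 := hs2
    exact (hb'.isCanonicalBlockMap_iff (hα' 0)).2
      fun h' => (hb.1.isCanonicalBlockMap_iff (hα 0)).1 hb ((h 0).2 h')

end CanonicalBlocks

section WellQuasiOrder

open Set.PartiallyWellOrderedOn

/-- Let the `i`-th term of a bad sequence in this set lie below `f (ν i)`, with `ν k` smallest. Then
the first `ν k` terms of `f`, continued by the terms of the sequence from the `k`-th on, form a bad
sequence that contradicts the minimality of `f`. -/
theorem partiallyWellOrderedOn_lt_minBadSeq {X : Type*} {r : X → X → Prop} [IsTrans X r]
    {rk : X → ℕ} {f : ℕ → X} (hf : IsBadSeq r Set.univ f)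
    (hmin : ∀ n, IsMinBadSeq r rk Set.univ n f) :
    {d | ∃ n, r d (f n) ∧ rk d < rk (f n)}.PartiallyWellOrderedOn r := by
  rw [iff_forall_not_isBadSeq]
  rintro g ⟨hg, g_bad⟩
  choose ν r_ν rk_ν using hg
  obtain ⟨k, hk⟩ : ∃ k, ∀ l, ν k ≤ ν l := by
    obtain ⟨k, -, hk⟩ := (measure ν).wf.has_min Set.univ Set.univ_nonempty
    exact ⟨k, fun l => not_lt.1 (hk l trivial)⟩
  refine hmin (ν k) (fun i => if i < ν k then f i else g (k + (i - ν k)))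
    (fun m hm => (if_pos hm).symm) (by simpa using rk_ν k) ⟨fun _ => trivial, fun i j hij => ?_⟩
  beta_reduce
  by_cases hj : j < ν k
  · rw [if_pos hj, if_pos (hij.trans hj)]
    exact hf.2 i j hij
  rw [if_neg hj]
  by_cases hi : i < ν k
  · rw [if_pos hi]
    exact fun hr => hf.2 i _ (hi.trans_le (hk _)) (_root_.trans hr (r_ν _))
  · rw [if_neg hi]
    exact g_bad _ _ (by lia)

theorem wellQuasiOrdered_of_monotone_parts {X S : Type*} [Preorder X] [Finite S] {ι : S → Type*}
    [∀ s, Finite (ι s)] (size : X → ℕ) (parts : X → Σ s, ι s → X)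
    (parts_le : ∀ x c, (parts x).2 c ≤ x) (size_lt : ∀ x c, size ((parts x).2 c) < size x)
    (le_of_le : ∀ x y s a b, parts x = ⟨s, a⟩ → parts y = ⟨s, b⟩ → a ≤ b → x ≤ y) :
    WellQuasiOrdered fun x y : X => x ≤ y := by
  rw [← Set.partiallyWellOrderedOn_univ_iff, iff_not_exists_isMinBadSeq size]
  rintro ⟨f, hf, hmin⟩
  have wqo_D := partiallyWellOrderedOn_lt_minBadSeq hf hmin
  set D := {d | ∃ n, d ≤ f n ∧ size d < size (f n)}
  obtain ⟨g, hg⟩ :=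
    (Finite.wellQuasiOrdered fun s t : S => s = t).exists_monotone_subseq fun n => (parts (f n)).1
  obtain ⟨s, hs⟩ : ∃ s, ∀ n, (parts (f (g n))).1 = s := ⟨_, fun n => (hg 0 n n.zero_le).symm⟩
  have exists_parts_eq (n) : ∃ a : ι s → D, parts (f (g n)) = ⟨s, fun c => a c⟩ := by
    rw [← hs n]
    exact ⟨fun c => ⟨(parts (f (g n))).2 c, g n, parts_le _ c, size_lt _ c⟩, rfl⟩
  choose a parts_eq using exists_parts_eq
  have wqo_pi : WellQuasiOrdered fun a b : ι s → D => ∀ c, a c ≤ b c :=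
    WellQuasiOrdered.pi fun _ => wqo_D
  obtain ⟨i, j, hij, h⟩ := wqo_pi a
  exact hf.2 _ _ (g.strictMono hij) (le_of_le _ _ s _ _ (parts_eq i) (parts_eq j) h)

end WellQuasiOrder

section Decompositions

/-- The nonempty members of a class. -/
abbrev ClassElt (C : ∀ n, Set (Perm n)) : Type :=
  {p : FinPerm // p.perm ∈ C p.length ∧ 0 < p.length}

/-- The simple permutations of length at least two in a class. -/
abbrev ClassSimple (C : ∀ n, Set (Perm n)) : Type :=
  {s : FinPerm // s.perm ∈ C s.length ∧ IsSimple s.perm ∧ 2 ≤ s.length}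

theorem finite_setOf_length_le (N : ℕ) : {p : FinPerm | p.length ≤ N}.Finite :=
  Set.finite_coe_iff.1 <| .of_surjective
    (fun q : Σ n : Fin (N + 1), Perm n => ⟨⟨q.1, q.2⟩, Nat.le_of_lt_succ q.1.2⟩)
    fun ⟨⟨n, π⟩, h⟩ => ⟨⟨⟨n, Nat.lt_succ_of_le h⟩, π⟩, rfl⟩

theorem FinPerm.le_of_length_eq_one {p q : FinPerm} (hp : p.length = 1) (hq : 0 < q.length) :
    p ≤ q := by
  have : Subsingleton (Fin p.length) := by rw [hp]; infer_instance
  exact ⟨fun _ => ⟨0, hq⟩, Subsingleton.strictMono _, fun s t => by simp [Subsingleton.elim s t]⟩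

variable {C : ∀ n, Set (Perm n)}

theorem finite_classSimple (hfin : FinitelyManySimples C) : Finite (ClassSimple C) :=
  have := hfin.to_subtype
  .of_injective (β := {p : Σ n : ℕ, Perm n | p.2 ∈ C p.1 ∧ IsSimple p.2})
    (fun s => ⟨⟨s.1.length, s.1.perm⟩, s.2.1, s.2.2.1⟩) fun ⟨⟨m, σ⟩, _⟩ ⟨⟨n, τ⟩, _⟩ h => by
      obtain ⟨rfl, h⟩ := Sigma.mk.inj (congrArg Subtype.val h)
      obtain rfl := eq_of_heq h
      rfl

/-- The number of components in a decomposition. The rule `none` stands for a single point, and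
`some s` for an inflation of `s`. -/
def arity : Option (ClassSimple C) → ℕ
  | none => 0
  | some s => s.1.length

/-- The contribution of a rule to the length, besides that of the components. -/
def pointCount : Option (ClassSimple C) → ℕ
  | none => 1
  | some _ => 0

/-- A rule with the components to which it is applied. -/
abbrev Decomposition (C : ∀ n, Set (Perm n)) : Type :=
  Σ s : Option (ClassSimple C), Fin (arity s) → ClassElt C

/-- Either `y` is a single point, or it is split by a canonical block map. -/
inductive IsDecomposition (y : ClassElt C) : Decomposition C → Prop
  | point (x : Fin (arity (none : Option (ClassSimple C))) → ClassElt C) (h : y.1.length = 1) :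
    IsDecomposition y ⟨none, x⟩
  | inflation (s : ClassSimple C) (x : Fin s.1.length → ClassElt C)
    (b : Fin y.1.length → Fin s.1.length) (hb : IsCanonicalBlockMap s.1.perm y.1.perm b)
    (hx : ∀ c, IsPattern y.1.perm {i | b i = c} (x c).1) : IsDecomposition y ⟨some s, x⟩

theorem exists_isDecomposition (hC : IsPermClass C) (y : ClassElt C) :
    ∃ d, IsDecomposition y d := by
  by_cases hy : y.1.length = 1
  · exact ⟨_, .point Fin.elim0 hy⟩
  obtain ⟨s, two_le, s_simple, s_quot⟩ := exists_isSimple_isQuotient y.1.perm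
    ((Nat.succ_le_iff.2 y.2.2).lt_of_ne' hy)
  obtain ⟨b, hb⟩ := FinPerm.IsSimpleQuotient.exists_isCanonicalBlockMap ⟨two_le, s_simple, s_quot⟩
  choose x hx using fun c => exists_isPattern y.1.perm {i | b i = c}
  have x_pos (c) : 0 < (x c).length := by
    rw [← (hx c).ncard_eq]
    exact (Set.ncard_pos (Set.toFinite _)).2 (hb.1.surjective c)
  exact ⟨_, .inflation ⟨s, hC _ _ y.2.1 hb.1.contains, s_simple, two_le⟩
    (fun c => ⟨x c, hC _ _ y.2.1 (hx c).le, x_pos c⟩) b hb hx⟩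

namespace IsDecomposition

theorem isInflation {y : ClassElt C} {s : ClassSimple C} {x : Fin s.1.length → ClassElt C}
    (h : IsDecomposition y ⟨some s, x⟩) : IsInflation s.1.perm (fun c => (x c).1) y.1 := by
  cases h with
  | inflation _ _ b hb hx => exact ⟨b, hb.1, hx⟩

theorem isSimpleQuotient {y : ClassElt C} {s : ClassSimple C} {x : Fin s.1.length → ClassElt C}
    (h : IsDecomposition y ⟨some s, x⟩) : s.1.IsSimpleQuotient y.1.perm := by
  obtain ⟨b, hb, -⟩ := h.isInflation
  exact ⟨s.2.2.2, s.2.2.1, b, hb⟩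

variable {y y' : ClassElt C} {d d' : Decomposition C}

theorem length_eq (h : IsDecomposition y d) :
    y.1.length = pointCount d.1 + ∑ c, (d.2 c).1.length := by
  obtain ⟨_ | s, x⟩ := d
  · cases h with
    | point _ h => exact h.trans (by rfl)
  · exact h.isInflation.length_eq.trans (zero_add _).symm

theorem part_le (h : IsDecomposition y d) (c) : d.2 c ≤ y := by
  cases h with
  | point => exact c.elim0
  | inflation s x b hb hx => exact (hx c).le

theorem part_length_lt (h : IsDecomposition y d) (c) : (d.2 c).1.length < y.1.length := by
  obtain ⟨_ | s, x⟩ := d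
  · exact c.elim0
  have : Nontrivial (Fin s.1.length) := Fin.nontrivial_iff_two_le.2 s.2.2.2
  obtain ⟨c', hc'⟩ := exists_ne (α := Fin s.1.length) c
  rw [h.isInflation.length_eq]
  exact Finset.single_lt_sum (f := fun c => (x c).1.length) hc' (Finset.mem_univ c)
    (Finset.mem_univ c') (x c').2.2 fun _ _ _ => Nat.zero_le _

theorem le_of_le {s : Option (ClassSimple C)} {x x' : Fin (arity s) → ClassElt C}
    (h : IsDecomposition y ⟨s, x⟩) (h' : IsDecomposition y' ⟨s, x'⟩) (hx : x ≤ x') : y ≤ y' := by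
  cases s with
  | none =>
    cases h with
    | point _ h => exact FinPerm.le_of_length_eq_one h y'.2.2
  | some s => exact h.isInflation.mono h'.isInflation hx

theorem length_ne_one {s : ClassSimple C} {x : Fin s.1.length → ClassElt C}
    (h : IsDecomposition y ⟨some s, x⟩) : y.1.length ≠ 1 := by
  obtain ⟨b, hb⟩ := h.isSimpleQuotient.isQuotient
  have := s.2.2.2.trans hb.contains.length_le
  lia

theorem unique (h : IsDecomposition y d) (h' : IsDecomposition y d') : d = d' := by
  cases h with
  | point x hy =>
    cases h' with
    | point x' =>
      obtain rfl : x = x' := funext fun c => c.elim0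
      rfl
    | inflation s x' b hb hx => exact absurd hy (length_ne_one (.inflation s x' b hb hx))
  | inflation s x b hb hx =>
    have hs := (inflation s x b hb hx).isSimpleQuotient
    cases h' with
    | point x' hy => exact absurd hy (length_ne_one (.inflation s x b hb hx))
    | inflation s' x' b' hb' hx' =>
      obtain rfl : s = s' :=
        Subtype.ext (hs.unique (inflation s' x' b' hb' hx').isSimpleQuotient)
      obtain rfl : b = b' := hb.unique hb'
      obtain rfl : x = x' := funext fun c => Subtype.ext ((hx c).unique (hx' c))
      rfl

end IsDecomposition

theorem ClassElt.wellQuasiOrdered (hC : IsPermClass C) [Finite (ClassSimple C)] :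
    WellQuasiOrdered fun x y : ClassElt C => x ≤ y := by
  choose parts isDecomposition using exists_isDecomposition hC
  refine wellQuasiOrdered_of_monotone_parts (fun y => y.1.length) parts
    (fun y => (isDecomposition y).part_le) (fun y => (isDecomposition y).part_length_lt)
    fun y y' s x x' hy hy' => ?_
  exact (hy ▸ isDecomposition y).le_of_le (hy' ▸ isDecomposition y')

end Decompositions

section Types

variable {C : ∀ n, Set (Perm n)}

theorem exists_bound_mem (hC : IsPermClass C)
    (hwqo : WellQuasiOrdered fun x y : ClassElt C => x ≤ y) {m : ℕ} (σ : Perm m) :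
    ∃ N, ∀ (x x' : Fin m → ClassElt C) (p p' : FinPerm),
      IsInflation σ (fun c => (x c).1) p → IsInflation σ (fun c => (x' c).1) p' →
      (∀ c (t : FinPerm), t.length ≤ N → t ≤ (x' c).1 → t ≤ (x c).1) →
      p.perm ∈ C p.length → p'.perm ∈ C p'.length := by
  by_contra! hcon
  choose x x' p p' hp hp' patterns_le p_mem p'_notMem using hcon
  have wqo_pi : WellQuasiOrdered fun a b : Fin m → ClassElt C => a ≤ b :=
    WellQuasiOrdered.pi fun _ => hwqo
  obtain ⟨g, hg⟩ := wqo_pi.exists_monotone_subseq x'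
  set n := ∑ c, (x' (g 0) c).1.length
  have length_le (c) : (x' (g 0) c).1.length ≤ g n :=
    (Finset.single_le_sum (f := fun c => (x' (g 0) c).1.length) (fun _ _ => Nat.zero_le _)
      (Finset.mem_univ c)).trans g.strictMono.le_apply
  have p'_le_p : p' (g 0) ≤ p (g n) := (hp' (g 0)).mono (hp (g n)) fun c =>
    patterns_le (g n) c _ (length_le c) (hg 0 n n.zero_le c)
  exact p'_notMem (g 0) (hC _ _ (p_mem (g n)) p'_le_p)

/-- The finitely much information about `y` that is relevant to the inflations having `y` as a
component: its patterns of length at most `M`, which decide if the inflation belongs to the class,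
and its simple quotient, which decides if the block map is canonical. -/
def decompositionType (M : ℕ) (y : ClassElt C) :
    Set {t : FinPerm | t.length ≤ M} × Set (ClassSimple C) :=
  ({t | t.1 ≤ y.1}, {s | IsQuotient s.1.perm y.1.perm})

theorem decompositionType_eq_iff {M : ℕ} {y y' : ClassElt C} :
    decompositionType M y = decompositionType M y' ↔
      (∀ t : FinPerm, t.length ≤ M → (t ≤ y.1 ↔ t ≤ y'.1)) ∧
        ∀ s : ClassSimple C, IsQuotient s.1.perm y.1.perm ↔ IsQuotient s.1.perm y'.1.perm := by
  simp [decompositionType, Set.ext_iff]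

theorem decompositionType_eq_of_isSimpleQuotient {M : ℕ} {y y' : ClassElt C} {s : FinPerm}
    (h : s.IsSimpleQuotient y.1.perm) (h' : s.IsSimpleQuotient y'.1.perm)
    (hM : ∀ t : FinPerm, t.length ≤ M → (t ≤ y.1 ↔ t ≤ y'.1)) :
    decompositionType M y = decompositionType M y' := by
  refine decompositionType_eq_iff.2 ⟨hM, fun r => ⟨fun hr => ?_, fun hr => ?_⟩⟩
  · rw [FinPerm.IsSimpleQuotient.unique ⟨r.2.2.2, r.2.2.1, hr⟩ h]
    exact h'.isQuotient
  · rw [FinPerm.IsSimpleQuotient.unique ⟨r.2.2.2, r.2.2.1, hr⟩ h']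
    exact h.isQuotient

theorem exists_decompositionType_eq_of_inflation {M : ℕ} {s : ClassSimple C}
    {x x' : Fin s.1.length → ClassElt C} {y : ClassElt C}
    (hM : ∀ p, IsInflation s.1.perm (fun c => (x' c).1) p →
      (∀ c (t : FinPerm), t.length ≤ M → t ≤ (x' c).1 → t ≤ (x c).1) → p.perm ∈ C p.length)
    (hy : IsDecomposition y ⟨some s, x⟩)
    (hx : ∀ c, decompositionType M (x' c) = decompositionType M (x c)) :
    ∃ z, IsDecomposition z ⟨some s, x'⟩ ∧ decompositionType M z = decompositionType M y := by
  have le_iff c := (decompositionType_eq_iff.1 (hx c)).1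
  have isQuotient_iff c := (decompositionType_eq_iff.1 (hx c)).2 s
  obtain ⟨p, hp⟩ := exists_isInflation s.1.perm (fun c => (x' c).1) fun c => (x' c).2.2
  have p_mem := hM p hp fun c t ht => (le_iff c t ht).1
  obtain ⟨b', hb', hx'⟩ := id hp
  have p_pos : 0 < p.length :=
    zero_lt_two.trans_le (s.2.2.2.trans hb'.contains.length_le)
  have hs := hy.isSimpleQuotient
  refine ⟨⟨p, p_mem, p_pos⟩, .inflation s x' b' ?_ hx',
    decompositionType_eq_of_isSimpleQuotient ⟨hs.two_le, hs.isSimple, b', hb'⟩ hs fun t ht => ⟨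
      hp.le_of_forall_le hy.isInflation (fun c t ht => (le_iff c t ht).1) ht,
      hy.isInflation.le_of_forall_le hp (fun c t ht => (le_iff c t ht).2) ht⟩⟩
  cases hy with
  | inflation _ _ b hb hx =>
    exact hb.of_isQuotient_iff hs hb' hx hx' fun c => (isQuotient_iff c).symm

theorem exists_decompositionType_eq (hC : IsPermClass C) [Finite (ClassSimple C)] :
    ∃ M, ∀ (y : ClassElt C) s (x x' : Fin (arity s) → ClassElt C), IsDecomposition y ⟨s, x⟩ →
      (∀ c, decompositionType M (x' c) = decompositionType M (x c)) →
      ∃ z, IsDecomposition z ⟨s, x'⟩ ∧ decompositionType M z = decompositionType M y := by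
  choose N hN using fun s : ClassSimple C =>
    exists_bound_mem hC (ClassElt.wellQuasiOrdered hC) s.1.perm
  obtain ⟨M, hM⟩ := (Set.finite_range N).bddAbove
  refine ⟨M, fun y s x x' hy hx => ?_⟩
  cases s with
  | none =>
    cases hy with
    | point _ h => exact ⟨y, .point x' h, rfl⟩
  | some s =>
    refine exists_decompositionType_eq_of_inflation (fun p hp hle => ?_) hy hx
    exact hN s x x' y.1 p hy.isInflation hp (fun c t ht => hle c t (ht.trans (hM ⟨s, rfl⟩))) y.2.1

theorem exists_unambiguousSpec (hC : IsPermClass C) [Finite (ClassSimple C)] :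
    ∃ (M : ℕ) (parts : ClassElt C → Decomposition C),
      UnambiguousSpec (fun y : ClassElt C => y.1.length) pointCount parts
        (decompositionType M) := by
  obtain ⟨M, hM⟩ := exists_decompositionType_eq hC
  choose parts isDecomposition using exists_isDecomposition hC
  refine ⟨M, parts, fun n => ?_, fun y => y.2.2, fun y y' h => ?_,
    fun y => (isDecomposition y).length_eq, fun y x hx => ?_, fun s => ?_⟩
  · have := (finite_setOf_length_le n).to_subtype
    exact .of_injective (β := {p : FinPerm | p.length ≤ n}) (fun y => ⟨y.1.1, y.2.le⟩)
      fun y y' h => Subtype.ext (Subtype.ext (Subtype.mk.inj h))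
  · have hy' := isDecomposition y'
    rw [← h] at hy'
    exact le_antisymm ((isDecomposition y).le_of_le hy' le_rfl)
      (hy'.le_of_le (isDecomposition y) le_rfl)
  · obtain ⟨z, hz, z_ty⟩ := hM y _ _ x (isDecomposition y) hx
    exact ⟨z, (isDecomposition z).unique hz, z_ty⟩
  · cases s with
    | none => exact .inl Fin.isEmpty
    | some s =>
      have card_eq : s.1.length = 0 + Fintype.card (Fin s.1.length) := by simp
      exact .inr (s.2.2.2.trans_eq card_eq)

theorem isAlgebraic_sizeGF_length (hC : IsPermClass C) [Finite (ClassSimple C)] :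
    IsAlgebraic (Polynomial ℚ) (sizeGF ℚ fun y : ClassElt C => y.1.length) := by
  obtain ⟨M, parts, spec⟩ := exists_unambiguousSpec hC
  have := (finite_setOf_length_le M).to_subtype
  exact spec.isAlgebraic_sizeGF

theorem sizeGF_length_eq_genFun (C : ∀ n, Set (Perm n)) :
    sizeGF ℚ (fun y : ClassElt C => y.1.length) = genFun C := by
  ext n
  rw [sizeGF, genFun, PowerSeries.coeff_mk, PowerSeries.coeff_mk]
  split_ifs with hn
  · have : IsEmpty {y : ClassElt C // y.1.length = n} := ⟨fun y => y.1.2.2.ne' (y.2.trans hn)⟩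
    simp
  · have bijective : Function.Bijective fun π : C n =>
        (⟨⟨⟨n, π.1⟩, π.2, Nat.pos_of_ne_zero hn⟩, rfl⟩ : {y : ClassElt C // y.1.length = n}) := by
      constructor
      · rintro ⟨π, _⟩ ⟨π', _⟩ h
        have := congrArg (fun y => y.1.1) h
        simp_all
      · rintro ⟨⟨⟨n, π⟩, h, _⟩, rfl⟩
        exact ⟨⟨π, h⟩, rfl⟩
    rw [Nat.card_congr (Equiv.ofBijective _ bijective)]

theorem isAlgebraicOverQx_iff {f : PowerSeries ℚ} :
    IsAlgebraicOverQx f ↔ IsAlgebraic (Polynomial ℚ) f := by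
  have algebraMap_eq : algebraMap (Polynomial ℚ) (PowerSeries ℚ) =
      Polynomial.coeToPowerSeries.ringHom :=
    RingHom.ext fun p => by simp [PowerSeries.algebraMap_apply']
  simp only [IsAlgebraicOverQx, IsAlgebraic, Polynomial.aeval_def, algebraMap_eq]

end Types

/-- If `C` is a permutation class containing only finitely many simple permutations,
then the generating function of `C` is algebraic over `ℚ[x]`. -/
theorem statement0 (C : ∀ n, Set (Perm n)) (hC : IsPermClass C)
    (hfin : FinitelyManySimples C) : IsAlgebraicOverQx (genFun C) := by
  have := finite_classSimple hfin
  rw [isAlgebraicOverQx_iff, ← sizeGF_length_eq_genFun]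
  exact isAlgebraic_sizeGF_length hC
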